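/- arXiv:2412.18803 — 3 statements merged into one kernel-verified Lean document; each statement's English description precedes it below -/
import Mathlib

section
/- Bias bound for the one-step absolute error estimator: for any bounded measurable τ̂ : 𝒳 → ℝ with |μ̃₁(x) − μ̃₀(x) − τ̂(x)| ≤ B̃ for all x, writing Δ := μ₁ − μ₀, Δ̃ := μ̃₁ − μ̃₀, and R̃ := W(Y − μ̃₁(X))/ẽ(X) − (1−W)(Y − μ̃₀(X))/(1−ẽ(X)), one has | E[(Δ̃(X) − τ̂(X))² + 2(Δ̃(X) − τ̂(X))·R̃] − φ(τ̂) | ≤ E[(Δ(X) − Δ̃(X))²] + (2B̃/η′)·( E[|ẽ(X) − e(X)|·|μ̃₁(X) − μ₁(X)|] + E[|ẽ(X) − e(X)|·|μ̃₀(X) − μ₀(X)|] ). -/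
open MeasureTheory ProbabilityTheory

/-!
Write `D = Δ̃ - τ̂` and `δ = Δ - Δ̃`, so that `(τ̂ - Δ)² = D² + 2Dδ + δ²`. The one-step estimator
replaces the unknown first-order term `2Dδ` by `2DR̃`, where `R̃` is the augmented inverse
probability weighted (AIPW) residual. Conditionally on `X`, the mean of `R̃` is

`e(μ₁ - μ̃₁)/ẽ - (1 - e)(μ₀ - μ̃₀)/(1 - ẽ) = δ + (ẽ - e)((μ̃₁ - μ₁)/ẽ + (μ̃₀ - μ₀)/(1 - ẽ))`.

The bias is therefore the neglected `-δ²` plus `2D` times a remainder that is a product of errors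
in the propensity score and in the outcome regressions.
-/

lemma memLp_comp_of_abs_le {Ω 𝒳 : Type*} [MeasurableSpace Ω] [MeasurableSpace 𝒳] {P : Measure Ω}
    [IsFiniteMeasure P] {p : ENNReal} {X : Ω → 𝒳} (hX : Measurable X) {f : 𝒳 → ℝ} {C : ℝ}
    (hf : Measurable f) (hC : ∀ x, |f x| ≤ C) : MemLp (fun ω => f (X ω)) p P :=
  .of_bound (hf.comp hX).aestronglyMeasurable C (.of_forall fun ω => hC (X ω))

lemma stronglyMeasurable_comap_comp {Ω 𝒳 : Type*} [m𝒳 : MeasurableSpace 𝒳] (X : Ω → 𝒳)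
    {f : 𝒳 → ℝ} (hf : Measurable f) : StronglyMeasurable[m𝒳.comap X] fun ω => f (X ω) :=
  (hf.comp (comap_measurable X)).stronglyMeasurable

lemma integrable_mul_sub_div {Ω : Type*} [MeasurableSpace Ω] {P : Measure Ω}
    {V Y mt q : Ω → ℝ} {c : ℝ} (hV : MemLp V 2 P) (hY : MemLp Y 2 P)
    (hmt : MemLp mt 2 P) (hq : AEStronglyMeasurable q P) (hc : 0 < c)
    (hqc : ∀ᵐ ω ∂P, c ≤ q ω) :
    Integrable (fun ω => V ω * (Y ω - mt ω) / q ω) P := by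
  refine (hV.integrable_mul (hY.sub hmt)).mul_bdd (c := c⁻¹)
    hq.aemeasurable.inv.aestronglyMeasurable ?_
  filter_upwards [hqc] with ω hω
  rw [norm_inv]
  exact inv_anti₀ hc (hω.trans (le_abs_self _))

section CondExp

variable {Ω : Type*} {𝓖 mΩ : MeasurableSpace Ω} {P : Measure Ω} [IsFiniteMeasure P]

lemma integral_mul_eq_of_condExp_ae_eq {g Z f : Ω → ℝ} {C : ℝ} (h𝓖 : 𝓖 ≤ mΩ)
    (hg : StronglyMeasurable[𝓖] g) (hgC : ∀ᵐ ω ∂P, |g ω| ≤ C) (hZ : Integrable Z P)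
    (hf : P[Z | 𝓖] =ᵐ[P] f) :
    ∫ ω, g ω * Z ω ∂P = ∫ ω, g ω * f ω ∂P :=
  calc ∫ ω, g ω * Z ω ∂P = ∫ ω, (P[g * Z | 𝓖]) ω ∂P := (integral_condExp h𝓖).symm
    _ = ∫ ω, g ω * f ω ∂P := integral_congr_ae <|
      (condExp_stronglyMeasurable_mul_of_bound h𝓖 hg hZ C hgC).trans (hf.mono fun ω hω => by
        simp only [Pi.mul_apply, hω])

section OneStep

variable {Δ Δt τ R r : Ω → ℝ} {B : ℝ}

lemma integral_one_step_sub_eq (h𝓖 : 𝓖 ≤ mΩ) (hD : StronglyMeasurable[𝓖] fun ω => Δt ω - τ ω)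
    (hDB : ∀ᵐ ω ∂P, |Δt ω - τ ω| ≤ B) (hδ : MemLp (fun ω => Δ ω - Δt ω) 2 P)
    (hR : Integrable R P) (hr : P[R | 𝓖] =ᵐ[P] r) :
    (∫ ω, ((Δt ω - τ ω) ^ 2 + 2 * (Δt ω - τ ω) * R ω) ∂P) - ∫ ω, (τ ω - Δ ω) ^ 2 ∂P
      = ∫ ω, (2 * (Δt ω - τ ω) * (r ω - (Δ ω - Δt ω)) - (Δ ω - Δt ω) ^ 2) ∂P := by
  have hD_memLp : MemLp (fun ω => Δt ω - τ ω) 2 P :=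
    .of_bound (hD.mono h𝓖).aestronglyMeasurable B hDB
  have htwice_meas : StronglyMeasurable[𝓖] fun ω => 2 * (Δt ω - τ ω) := hD.const_mul 2
  have htwice_le : ∀ᵐ ω ∂P, |2 * (Δt ω - τ ω)| ≤ 2 * B := hDB.mono fun ω hω => by
    rw [abs_mul, abs_two]
    linarith
  have integrable_twice_mul {Z : Ω → ℝ} (hZ : Integrable Z P) :
      Integrable (fun ω => 2 * (Δt ω - τ ω) * Z ω) P :=
    hZ.bdd_mul (htwice_meas.mono h𝓖).aestronglyMeasurable htwice_le
  have hr_int : Integrable r P := integrable_condExp.congr hr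
  have hφ : Integrable (fun ω => (τ ω - Δ ω) ^ 2) P :=
    (hD_memLp.add hδ).integrable_sq.congr <| .of_forall fun ω => by
      simp only [Pi.add_apply]
      ring
  rw [integral_add hD_memLp.integrable_sq (integrable_twice_mul hR),
    integral_mul_eq_of_condExp_ae_eq h𝓖 htwice_meas htwice_le hR hr,
    ← integral_add hD_memLp.integrable_sq (integrable_twice_mul hr_int),
    ← integral_sub (hD_memLp.integrable_sq.fun_add (integrable_twice_mul hr_int)) hφ]
  congr with ω
  ring

lemma abs_integral_one_step_sub_le {ρ : Ω → ℝ} (h𝓖 : 𝓖 ≤ mΩ)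
    (hD : StronglyMeasurable[𝓖] fun ω => Δt ω - τ ω) (hDB : ∀ᵐ ω ∂P, |Δt ω - τ ω| ≤ B)
    (hδ : MemLp (fun ω => Δ ω - Δt ω) 2 P) (hR : Integrable R P) (hr : P[R | 𝓖] =ᵐ[P] r)
    (hρ : Integrable ρ P) (hrρ : ∀ᵐ ω ∂P, |r ω - (Δ ω - Δt ω)| ≤ ρ ω) :
    |(∫ ω, ((Δt ω - τ ω) ^ 2 + 2 * (Δt ω - τ ω) * R ω) ∂P) - ∫ ω, (τ ω - Δ ω) ^ 2 ∂P|
      ≤ (∫ ω, (Δ ω - Δt ω) ^ 2 ∂P) + 2 * B * ∫ ω, ρ ω ∂P := by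
  rw [integral_one_step_sub_eq h𝓖 hD hDB hδ hR hr, ← integral_const_mul,
    ← integral_add hδ.integrable_sq (hρ.const_mul (2 * B)), ← Real.norm_eq_abs]
  refine norm_integral_le_of_norm_le (hδ.integrable_sq.fun_add (hρ.const_mul (2 * B))) ?_
  filter_upwards [hDB, hrρ] with ω hDω hρω
  calc |2 * (Δt ω - τ ω) * (r ω - (Δ ω - Δt ω)) - (Δ ω - Δt ω) ^ 2|
      ≤ |2 * (Δt ω - τ ω) * (r ω - (Δ ω - Δt ω))| + |(Δ ω - Δt ω) ^ 2| := abs_sub _ _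
    _ = (Δ ω - Δt ω) ^ 2 + 2 * |Δt ω - τ ω| * |r ω - (Δ ω - Δt ω)| := by
        rw [abs_mul, abs_mul, abs_two, abs_sq, add_comm]
    _ ≤ (Δ ω - Δt ω) ^ 2 + 2 * B * ρ ω := by
        have hB : 0 ≤ B := (abs_nonneg _).trans hDω
        gcongr

end OneStep

lemma condExp_mul_sub_div {V Y p m mt q : Ω → ℝ} {c : ℝ} (h𝓖 : 𝓖 ≤ mΩ) (hV : MemLp V 2 P)
    (hY : MemLp Y 2 P) (hmt : MemLp mt 2 P) (hmt_meas : StronglyMeasurable[𝓖] mt)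
    (hq_meas : StronglyMeasurable[𝓖] q) (hc : 0 < c) (hqc : ∀ᵐ ω ∂P, c ≤ q ω)
    (hp : P[V | 𝓖] =ᵐ[P] p)
    (hm : P[fun ω => V ω * Y ω | 𝓖] =ᵐ[P] fun ω => p ω * m ω) :
    P[fun ω => V ω * (Y ω - mt ω) / q ω | 𝓖]
      =ᵐ[P] fun ω => p ω * (m ω - mt ω) / q ω := by
  have pull_div : P[fun ω => V ω * (Y ω - mt ω) / q ω | 𝓖]
      =ᵐ[P] P[fun ω => V ω * (Y ω - mt ω) | 𝓖] * q⁻¹ :=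
    condExp_mul_of_stronglyMeasurable_right hq_meas.measurable.inv.stronglyMeasurable
      (integrable_mul_sub_div hV hY hmt (hq_meas.mono h𝓖).aestronglyMeasurable hc hqc)
      (hV.integrable_mul (hY.sub hmt))
  have split_residual : P[fun ω => V ω * (Y ω - mt ω) | 𝓖]
      =ᵐ[P] P[fun ω => V ω * Y ω | 𝓖] - P[V * mt | 𝓖] := by
    simp only [mul_sub]
    exact condExp_sub (hV.integrable_mul hY) (hV.integrable_mul hmt) 𝓖
  have pull_mt : P[V * mt | 𝓖] =ᵐ[P] P[V | 𝓖] * mt :=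
    condExp_mul_of_stronglyMeasurable_right hmt_meas (hV.integrable_mul hmt)
      (hV.integrable one_le_two)
  filter_upwards [pull_div, split_residual, pull_mt, hp, hm] with ω h_div h_sub h_mt h_p h_m
  rw [h_div, Pi.mul_apply, h_sub, Pi.sub_apply, h_mt, Pi.mul_apply, h_p, h_m, Pi.inv_apply]
  ring

lemma condExp_one_sub {W e : Ω → ℝ} (h𝓖 : 𝓖 ≤ mΩ) (hW : Integrable W P)
    (he : P[W | 𝓖] =ᵐ[P] e) : P[fun ω => 1 - W ω | 𝓖] =ᵐ[P] fun ω => 1 - e ω := by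
  filter_upwards [condExp_sub (integrable_const (1 : ℝ)) hW 𝓖, he] with ω h_sub h_e
  refine h_sub.trans ?_
  rw [Pi.sub_apply, condExp_const h𝓖, h_e]

section AIPW

variable {W Y e μ₀ μ₁ μt₀ μt₁ et : Ω → ℝ} {c : ℝ}

lemma integrable_aipw_residual (hW : MemLp W 2 P) (hY : MemLp Y 2 P) (hμt₀ : MemLp μt₀ 2 P)
    (hμt₁ : MemLp μt₁ 2 P) (het_meas : AEStronglyMeasurable et P) (hc : 0 < c)
    (het : ∀ᵐ ω ∂P, c ≤ et ω ∧ et ω ≤ 1 - c) :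
    Integrable (fun ω => W ω * (Y ω - μt₁ ω) / et ω
      - (1 - W ω) * (Y ω - μt₀ ω) / (1 - et ω)) P :=
  (integrable_mul_sub_div hW hY hμt₁ het_meas hc (het.mono fun _ hω => hω.1)).sub
    (integrable_mul_sub_div ((memLp_const 1).sub hW) hY hμt₀
      (aestronglyMeasurable_const.sub het_meas) hc
      (het.mono fun _ hω => le_sub_comm.mp hω.2))

lemma condExp_aipw_residual (h𝓖 : 𝓖 ≤ mΩ) (hW : MemLp W 2 P) (hY : MemLp Y 2 P)
    (hμt₀ : MemLp μt₀ 2 P) (hμt₁ : MemLp μt₁ 2 P)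
    (hμt₀_meas : StronglyMeasurable[𝓖] μt₀) (hμt₁_meas : StronglyMeasurable[𝓖] μt₁)
    (het_meas : StronglyMeasurable[𝓖] et)
    (hc : 0 < c) (het : ∀ᵐ ω ∂P, c ≤ et ω ∧ et ω ≤ 1 - c)
    (hce : P[W | 𝓖] =ᵐ[P] e)
    (hc1 : P[fun ω => W ω * Y ω | 𝓖] =ᵐ[P] fun ω => e ω * μ₁ ω)
    (hc0 : P[fun ω => (1 - W ω) * Y ω | 𝓖] =ᵐ[P] fun ω => (1 - e ω) * μ₀ ω) :
    P[fun ω => W ω * (Y ω - μt₁ ω) / et ω - (1 - W ω) * (Y ω - μt₀ ω) / (1 - et ω) | 𝓖]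
      =ᵐ[P] fun ω => e ω * (μ₁ ω - μt₁ ω) / et ω
        - (1 - e ω) * (μ₀ ω - μt₀ ω) / (1 - et ω) := by
  have hV : MemLp (fun ω => 1 - W ω) 2 P := (memLp_const 1).sub hW
  have het_le : ∀ᵐ ω ∂P, c ≤ et ω := het.mono fun ω hω => hω.1
  have hle_one_sub : ∀ᵐ ω ∂P, c ≤ 1 - et ω := het.mono fun ω hω => le_sub_comm.mp hω.2
  have hone_sub_meas : StronglyMeasurable[𝓖] fun ω => 1 - et ω :=
    stronglyMeasurable_const.sub het_meas
  have treated_mean :=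
    condExp_mul_sub_div h𝓖 hW hY hμt₁ hμt₁_meas het_meas hc het_le hce hc1
  have control_mean :=
    condExp_mul_sub_div h𝓖 hV hY hμt₀ hμt₀_meas hone_sub_meas hc hle_one_sub
      (condExp_one_sub h𝓖 (hW.integrable one_le_two) hce) hc0
  have integrable_treated := integrable_mul_sub_div hW hY hμt₁
    (het_meas.mono h𝓖).aestronglyMeasurable hc het_le
  have integrable_control := integrable_mul_sub_div hV hY hμt₀
    (hone_sub_meas.mono h𝓖).aestronglyMeasurable hc hle_one_sub
  exact (condExp_sub integrable_treated integrable_control 𝓖).trans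
    (treated_mean.sub control_mean)

end AIPW

end CondExp

lemma abs_aipw_mean_sub_le {e et m₀ m₁ mt₀ mt₁ c : ℝ} (hc : 0 < c) (het : c ≤ et)
    (het' : et ≤ 1 - c) :
    |e * (m₁ - mt₁) / et - (1 - e) * (m₀ - mt₀) / (1 - et) - ((m₁ - m₀) - (mt₁ - mt₀))|
      ≤ (|et - e| * |mt₁ - m₁| + |et - e| * |mt₀ - m₀|) / c := by
  have het'' : c ≤ 1 - et := by linarith
  have abs_div_le {a b q : ℝ} (hq : c ≤ q) : |a * b / q| ≤ |a| * |b| / c := by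
    rw [abs_div, abs_mul, abs_of_pos (hc.trans_le hq)]
    gcongr
  have remainder_eq :
      e * (m₁ - mt₁) / et - (1 - e) * (m₀ - mt₀) / (1 - et) - ((m₁ - m₀) - (mt₁ - mt₀))
        = (et - e) * (mt₁ - m₁) / et + (et - e) * (mt₀ - m₀) / (1 - et) := by
    have := (hc.trans_le het).ne'
    have := (hc.trans_le het'').ne'
    field_simp
    ring
  rw [remainder_eq, add_div]
  exact (abs_add_le _ _).trans (add_le_add (abs_div_le het) (abs_div_le het''))

theorem absolute_error_one_step_bias_bound_general
    {Ω : Type*} {𝓖 mΩ : MeasurableSpace Ω} {P : Measure Ω} [IsFiniteMeasure P] (h𝓖 : 𝓖 ≤ mΩ)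
    {W Y e μ₀ μ₁ μt₀ μt₁ et τhat : Ω → ℝ} {η' Bt : ℝ}
    (hW : MemLp W 2 P) (hY : MemLp Y 2 P) (hμ₀ : MemLp μ₀ 2 P) (hμ₁ : MemLp μ₁ 2 P)
    (hce : P[W | 𝓖] =ᵐ[P] e)
    (hc1 : P[fun ω => W ω * Y ω | 𝓖] =ᵐ[P] fun ω => e ω * μ₁ ω)
    (hc0 : P[fun ω => (1 - W ω) * Y ω | 𝓖] =ᵐ[P] fun ω => (1 - e ω) * μ₀ ω)
    (hμt₀ : MemLp μt₀ 2 P) (hμt₁ : MemLp μt₁ 2 P)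
    (hμt₀_meas : StronglyMeasurable[𝓖] μt₀) (hμt₁_meas : StronglyMeasurable[𝓖] μt₁)
    (het_meas : StronglyMeasurable[𝓖] et) (hτ_meas : StronglyMeasurable[𝓖] τhat)
    (hη' : 0 < η') (het : ∀ᵐ ω ∂P, η' ≤ et ω ∧ et ω ≤ 1 - η')
    (hBt : ∀ᵐ ω ∂P, |μt₁ ω - μt₀ ω - τhat ω| ≤ Bt) :
    |(∫ ω, ((μt₁ ω - μt₀ ω - τhat ω) ^ 2 + 2 * (μt₁ ω - μt₀ ω - τhat ω)
          * (W ω * (Y ω - μt₁ ω) / et ω - (1 - W ω) * (Y ω - μt₀ ω) / (1 - et ω))) ∂P)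
        - ∫ ω, (τhat ω - (μ₁ ω - μ₀ ω)) ^ 2 ∂P|
      ≤ (∫ ω, ((μ₁ ω - μ₀ ω) - (μt₁ ω - μt₀ ω)) ^ 2 ∂P)
        + (2 * Bt / η') * ((∫ ω, |et ω - e ω| * |μt₁ ω - μ₁ ω| ∂P)
            + ∫ ω, |et ω - e ω| * |μt₀ ω - μ₀ ω| ∂P) := by
  have het_ae : AEStronglyMeasurable et P := (het_meas.mono h𝓖).aestronglyMeasurable
  have het_err : MemLp (fun ω => et ω - e ω) 2 P :=
    (memLp_of_bounded het het_ae 2).sub ((hW.condExp one_le_two).ae_eq hce)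
  have herr₁ : Integrable (fun ω => |et ω - e ω| * |μt₁ ω - μ₁ ω|) P :=
    het_err.abs.integrable_mul (hμt₁.sub hμ₁).abs
  have herr₀ : Integrable (fun ω => |et ω - e ω| * |μt₀ ω - μ₀ ω|) P :=
    het_err.abs.integrable_mul (hμt₀.sub hμ₀).abs
  refine (abs_integral_one_step_sub_le (Δ := fun ω => μ₁ ω - μ₀ ω)
    (Δt := fun ω => μt₁ ω - μt₀ ω) h𝓖 ((hμt₁_meas.sub hμt₀_meas).sub hτ_meas) hBt
    ((hμ₁.sub hμ₀).sub (hμt₁.sub hμt₀))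
    (integrable_aipw_residual hW hY hμt₀ hμt₁ het_ae hη' het)
    (condExp_aipw_residual h𝓖 hW hY hμt₀ hμt₁ hμt₀_meas hμt₁_meas het_meas hη' het hce hc1 hc0)
    ((herr₁.fun_add herr₀).div_const η')
    (het.mono fun ω hω => abs_aipw_mean_sub_le hη' hω.1 hω.2)).trans_eq ?_
  rw [integral_div, integral_add herr₁ herr₀]
  ring

/-- Bias bound for the one-step absolute error estimator: for `|Δ̃ − τ̂| ≤ B̃`,
`|E[(Δ̃(X) − τ̂(X))² + 2(Δ̃(X) − τ̂(X))·R̃] − φ(τ̂)|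
  ≤ E[(Δ(X) − Δ̃(X))²]
    + (2B̃/η′)·(E[|ẽ(X) − e(X)|·|μ̃₁(X) − μ₁(X)|] + E[|ẽ(X) − e(X)|·|μ̃₀(X) − μ₀(X)|])`. -/
theorem absolute_error_one_step_bias_bound
    {Ω 𝒳 : Type*} [MeasurableSpace Ω] [m𝒳 : MeasurableSpace 𝒳]
    (P : Measure Ω) [IsProbabilityMeasure P]
    (X : Ω → 𝒳) (W Y : Ω → ℝ)
    (hX : Measurable X) (hW : Measurable W) (hY : Measurable Y)
    (hW01 : ∀ᵐ ω ∂P, W ω = 0 ∨ W ω = 1)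
    (M : ℝ) (hM : 0 < M) (hYb : ∀ᵐ ω ∂P, |Y ω| ≤ M)
    (e μ₀ μ₁ : 𝒳 → ℝ)
    (he : Measurable e) (hμ₀ : Measurable μ₀) (hμ₁ : Measurable μ₁)
    (C₀ C₁ : ℝ) (hμ₀b : ∀ x, |μ₀ x| ≤ C₀) (hμ₁b : ∀ x, |μ₁ x| ≤ C₁)
    (η : ℝ) (hη₀ : 0 < η) (hη₁ : η < 1/2)
    (heb : ∀ x, η ≤ e x ∧ e x ≤ 1 - η)
    (hce : P[W | m𝒳.comap X] =ᵐ[P] fun ω => e (X ω))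
    (hc1 : P[fun ω => W ω * Y ω | m𝒳.comap X] =ᵐ[P] fun ω => e (X ω) * μ₁ (X ω))
    (hc0 : P[fun ω => (1 - W ω) * Y ω | m𝒳.comap X]
        =ᵐ[P] fun ω => (1 - e (X ω)) * μ₀ (X ω))
    (μt₀ μt₁ et : 𝒳 → ℝ)
    (hμt₀ : Measurable μt₀) (hμt₁ : Measurable μt₁) (het : Measurable et)
    (Ct₀ Ct₁ : ℝ) (hμt₀b : ∀ x, |μt₀ x| ≤ Ct₀) (hμt₁b : ∀ x, |μt₁ x| ≤ Ct₁)
    (η' : ℝ) (hη'₀ : 0 < η') (hη'₁ : η' < 1/2)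
    (hetb : ∀ x, η' ≤ et x ∧ et x ≤ 1 - η') :
    ∀ (τhat : 𝒳 → ℝ) (B Bt : ℝ), Measurable τhat → (∀ x, |τhat x| ≤ B) →
      (∀ x, |μt₁ x - μt₀ x - τhat x| ≤ Bt) →
      |(∫ ω, (((μt₁ (X ω) - μt₀ (X ω)) - τhat (X ω)) ^ 2
          + 2 * ((μt₁ (X ω) - μt₀ (X ω)) - τhat (X ω))
            * (W ω * (Y ω - μt₁ (X ω)) / et (X ω)
              - (1 - W ω) * (Y ω - μt₀ (X ω)) / (1 - et (X ω)))) ∂P)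
        - (∫ ω, (τhat (X ω) - (μ₁ (X ω) - μ₀ (X ω))) ^ 2 ∂P)|
        ≤ (∫ ω, ((μ₁ (X ω) - μ₀ (X ω)) - (μt₁ (X ω) - μt₀ (X ω))) ^ 2 ∂P)
          + (2 * Bt / η') * ((∫ ω, |et (X ω) - e (X ω)| * |μt₁ (X ω) - μ₁ (X ω)| ∂P)
              + ∫ ω, |et (X ω) - e (X ω)| * |μt₀ (X ω) - μ₀ (X ω)| ∂P) := by
  intro τhat B Bt hτ _ hBt
  have hW_memLp : MemLp W 2 P := .of_bound hW.aestronglyMeasurable 1 <| hW01.mono fun ω hω => by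
    rcases hω with h | h <;> simp [h]
  exact absolute_error_one_step_bias_bound_general hX.comap_le hW_memLp
    (.of_bound hY.aestronglyMeasurable M hYb)
    (memLp_comp_of_abs_le hX hμ₀ hμ₀b) (memLp_comp_of_abs_le hX hμ₁ hμ₁b) hce hc1 hc0
    (memLp_comp_of_abs_le hX hμt₀ hμt₀b) (memLp_comp_of_abs_le hX hμt₁ hμt₁b)
    (stronglyMeasurable_comap_comp X hμt₀) (stronglyMeasurable_comap_comp X hμt₁)
    (stronglyMeasurable_comap_comp X het) (stronglyMeasurable_comap_comp X hτ)
    hη'₀ (.of_forall fun ω => hetb (X ω)) (.of_forall fun ω => hBt (X ω))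
end

section
/- Unbiasedness of the DINA (difference in natural parameters) pseudo-outcome with true nuisance functions: let ℓ : ℝ → ℝ be a differentiable link function with derivative ℓ′, with ℓ and ℓ′ bounded on the range of μ₀ and μ₁. Then for every bounded measurable h : 𝒳 → ℝ, E[ h(X)·( W·ℓ′(μ₁(X))·(Y − μ₁(X))/e(X) + ℓ(μ₁(X)) − (1−W)·ℓ′(μ₀(X))·(Y − μ₀(X))/(1−e(X)) − ℓ(μ₀(X)) ) ] = E[ h(X)·(ℓ(μ₁(X)) − ℓ(μ₀(X))) ], i.e., the DINA one-step integrand identifies the weighted average of the DINA treatment effect τ(x) = ℓ(μ₁(x)) − ℓ(μ₀(x)). -/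
open MeasureTheory ProbabilityTheory

/-!
If `p` and `μ` are the true propensity and outcome regression of a treatment arm with indicator
`A`, then `E[A (Y - μ) | X] = p μ - p μ = 0`. This survives multiplication by any function of `X`,
in particular by `ℓ′(μ) / p`, so the correction term of either arm has conditional mean zero and
only the plug-in part `ℓ(μ₁) - ℓ(μ₀)` remains. Overlap keeps the weights `1 / p` bounded and hence
everything integrable.
-/

section TreatmentArm

/-- The augmented inverse-propensity-weighted (one-step) score of a treatment arm with indicator
`A`, propensity `p` and outcome regression `μ`, for a target with plug-in value `v` whose
derivative with respect to the regression is `d`. For the mean transformed by a link `ℓ` one takes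
`v = ℓ(μ)` and `d = ℓ′(μ)`. -/
noncomputable def augmentedIPW {Ω : Type*} (A Y p μ d v : Ω → ℝ) : Ω → ℝ :=
  d / p * (A * (Y - μ)) + v

variable {Ω : Type*} {m mΩ : MeasurableSpace Ω} {P : Measure Ω} {A Y p μ d v : Ω → ℝ} {η C K : ℝ}

theorem integral_mul_eq_of_condExp_ae_eq_s12 {g Z k : Ω → ℝ} (hm : m ≤ mΩ) [SigmaFinite (P.trim hm)]
    (hg : AEStronglyMeasurable[m] g P) (hgZ : Integrable (g * Z) P) (hZ : Integrable Z P)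
    (hk : P[Z | m] =ᵐ[P] k) :
    ∫ ω, g ω * Z ω ∂P = ∫ ω, g ω * k ω ∂P := by
  calc ∫ ω, g ω * Z ω ∂P = ∫ ω, (P[g * Z | m]) ω ∂P := (integral_condExp hm).symm
    _ = ∫ ω, g ω * k ω ∂P := integral_congr_ae <|
      (condExp_mul_of_aestronglyMeasurable_left hg hgZ hZ).trans (.mul .rfl hk)

theorem ae_abs_div_le_of_le (hη : 0 < η) (hp : ∀ᵐ ω ∂P, η ≤ p ω) (hd : ∀ᵐ ω ∂P, |d ω| ≤ C) :
    ∀ᵐ ω ∂P, |(d / p) ω| ≤ C / η := by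
  filter_upwards [hp, hd] with ω hpω hdω
  rw [Pi.div_apply, abs_div, abs_of_pos (hη.trans_le hpω)]
  exact div_le_div₀ ((abs_nonneg _).trans hdω) hdω hη hpω

theorem integrable_of_condExp_ae_eq_mul {Z : Ω → ℝ} (hη : 0 < η) (hp : ∀ᵐ ω ∂P, η ≤ p ω)
    (hμ : AEStronglyMeasurable μ P) (hZ : P[Z | m] =ᵐ[P] p * μ) : Integrable μ P := by
  have hpμ : Integrable (p * μ) P := integrable_condExp.congr hZ
  refine (hpμ.const_mul η⁻¹).mono hμ ?_
  filter_upwards [hp] with ω hpω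
  have hle : η * |μ ω| ≤ |p ω * μ ω| := by
    rw [abs_mul]
    exact mul_le_mul_of_nonneg_right (hpω.trans (le_abs_self _)) (abs_nonneg _)
  rwa [norm_mul, norm_inv, Real.norm_of_nonneg hη.le, ← div_eq_inv_mul, le_div_iff₀' hη]

theorem condExp_mul_sub_ae_eq_zero (hμ : AEStronglyMeasurable[m] μ P) (hA : Integrable A P)
    (hAY : Integrable (A * Y) P) (hAμ : Integrable (A * μ) P)
    (hp : P[A | m] =ᵐ[P] p) (hpμ : P[A * Y | m] =ᵐ[P] p * μ) :
    P[A * (Y - μ) | m] =ᵐ[P] 0 := by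
  have pull_out : P[A * μ | m] =ᵐ[P] p * μ :=
    (condExp_mul_of_aestronglyMeasurable_right hμ hAμ hA).trans (hp.mul .rfl)
  calc P[A * (Y - μ) | m]
    _ = P[A * Y - A * μ | m] := by rw [mul_sub]
    _ =ᵐ[P] P[A * Y | m] - P[A * μ | m] := condExp_sub hAY hAμ m
    _ =ᵐ[P] p * μ - p * μ := hpμ.sub pull_out
    _ = 0 := sub_self _

theorem condExp_one_sub_ae_eq [IsFiniteMeasure P] (hm : m ≤ mΩ) (hA : Integrable A P)
    (hp : P[A | m] =ᵐ[P] p) : P[1 - A | m] =ᵐ[P] 1 - p :=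
  (condExp_sub (integrable_const 1) hA m).trans
    ((condExp_const hm (1 : ℝ)).eventuallyEq.sub hp)

theorem condExp_mul_add_ae_eq_of_condExp_ae_eq_zero {g R : Ω → ℝ} (hm : m ≤ mΩ)
    [SigmaFinite (P.trim hm)] (hg : AEStronglyMeasurable[m] g P)
    (hv : AEStronglyMeasurable[m] v P) (hgR : Integrable (g * R) P) (hR : Integrable R P)
    (hvi : Integrable v P) (hzero : P[R | m] =ᵐ[P] 0) :
    P[g * R + v | m] =ᵐ[P] v := by
  calc P[g * R + v | m]
    _ =ᵐ[P] P[g * R | m] + P[v | m] := condExp_add hgR hvi m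
    _ =ᵐ[P] g * P[R | m] + v :=
      (condExp_mul_of_aestronglyMeasurable_left hg hgR hR).add
        (condExp_of_aestronglyMeasurable' hm hv hvi)
    _ =ᵐ[P] g * 0 + v := (Filter.EventuallyEq.rfl.mul hzero).add .rfl
    _ = v := by rw [mul_zero, zero_add]

theorem integrable_augmentedIPW_and_condExp_ae_eq [IsFiniteMeasure P] (hm : m ≤ mΩ)
    (hA : AEStronglyMeasurable A P) (hAb : ∀ᵐ ω ∂P, |A ω| ≤ K) (hY : Integrable Y P)
    (hμ : AEStronglyMeasurable[m] μ P) (hη : 0 < η) (hpη : ∀ᵐ ω ∂P, η ≤ p ω)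
    (hAp : P[A | m] =ᵐ[P] p) (hAYμ : P[A * Y | m] =ᵐ[P] p * μ)
    (hd : AEStronglyMeasurable[m] d P) (hdb : ∀ᵐ ω ∂P, |d ω| ≤ C)
    (hv : AEStronglyMeasurable[m] v P) (hvi : Integrable v P) :
    Integrable (augmentedIPW A Y p μ d v) P ∧ P[augmentedIPW A Y p μ d v | m] =ᵐ[P] v := by
  have hμi : Integrable μ P := integrable_of_condExp_ae_eq_mul hη hpη (hμ.mono hm) hAYμ
  have residual_integrable : Integrable (A * (Y - μ)) P := (hY.sub hμi).bdd_mul hA hAb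
  have residual_mean_zero : P[A * (Y - μ) | m] =ᵐ[P] 0 :=
    condExp_mul_sub_ae_eq_zero hμ (.of_bound hA K hAb) (hY.bdd_mul hA hAb) (hμi.bdd_mul hA hAb)
      hAp hAYμ
  have hp : AEStronglyMeasurable[m] p P :=
    stronglyMeasurable_condExp.aestronglyMeasurable.congr hAp
  have weight_measurable : AEStronglyMeasurable[m] (d / p) P := hd.div₀ hp
  have weighted_integrable : Integrable (d / p * (A * (Y - μ))) P :=
    residual_integrable.bdd_mul (weight_measurable.mono hm) (ae_abs_div_le_of_le hη hpη hdb)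
  exact ⟨weighted_integrable.add hvi,
    condExp_mul_add_ae_eq_of_condExp_ae_eq_zero hm weight_measurable hv weighted_integrable
      residual_integrable hvi residual_mean_zero⟩

end TreatmentArm

theorem dina_one_step_unbiased_general {Ω : Type*} {m mΩ : MeasurableSpace Ω} {P : Measure Ω}
    [IsFiniteMeasure P] (hm : m ≤ mΩ) {W Y e μ₀ μ₁ h : Ω → ℝ} {η K Cℓ Ch : ℝ}
    (hW : AEStronglyMeasurable W P) (hWb : ∀ᵐ ω ∂P, |W ω| ≤ K) (hY : Integrable Y P)
    (hμ₀ : Measurable[m] μ₀) (hμ₁ : Measurable[m] μ₁)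
    (hη : 0 < η) (heη : ∀ᵐ ω ∂P, η ≤ e ω ∧ e ω ≤ 1 - η)
    (hce : P[W | m] =ᵐ[P] e) (hc1 : P[W * Y | m] =ᵐ[P] e * μ₁)
    (hc0 : P[(1 - W) * Y | m] =ᵐ[P] (1 - e) * μ₀)
    {ℓ : ℝ → ℝ} (hℓ : Differentiable ℝ ℓ)
    (hℓ₀ : Integrable (ℓ ∘ μ₀) P) (hℓ₁ : Integrable (ℓ ∘ μ₁) P)
    (hderiv₀ : ∀ᵐ ω ∂P, |deriv ℓ (μ₀ ω)| ≤ Cℓ) (hderiv₁ : ∀ᵐ ω ∂P, |deriv ℓ (μ₁ ω)| ≤ Cℓ)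
    (hh : Measurable[m] h) (hhb : ∀ᵐ ω ∂P, |h ω| ≤ Ch) :
    ∫ ω, h ω * (W ω * deriv ℓ (μ₁ ω) * (Y ω - μ₁ ω) / e ω + ℓ (μ₁ ω)
          - (1 - W ω) * deriv ℓ (μ₀ ω) * (Y ω - μ₀ ω) / (1 - e ω) - ℓ (μ₀ ω)) ∂P
      = ∫ ω, h ω * (ℓ (μ₁ ω) - ℓ (μ₀ ω)) ∂P := by
  have aesm {f : Ω → ℝ} (hf : Measurable[m] f) : AEStronglyMeasurable[m] f P :=
    hf.stronglyMeasurable.aestronglyMeasurable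
  have hℓm : Measurable ℓ := hℓ.continuous.measurable
  have hderiv : Measurable (deriv ℓ) := measurable_deriv ℓ
  have control_bound : ∀ᵐ ω ∂P, |(1 - W) ω| ≤ 1 + K := by
    filter_upwards [hWb] with ω hω
    exact (abs_sub _ _).trans (add_le_add abs_one.le hω)
  let treated := augmentedIPW W Y e μ₁ (deriv ℓ ∘ μ₁) (ℓ ∘ μ₁)
  let control := augmentedIPW (1 - W) Y (1 - e) μ₀ (deriv ℓ ∘ μ₀) (ℓ ∘ μ₀)
  obtain ⟨treated_integrable, treated_condExp⟩ :
      Integrable treated P ∧ P[treated | m] =ᵐ[P] ℓ ∘ μ₁ :=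
    integrable_augmentedIPW_and_condExp_ae_eq hm hW hWb hY (aesm hμ₁) hη
      (heη.mono fun _ hω => hω.1) hce hc1 (aesm (hderiv.comp hμ₁)) hderiv₁ (aesm (hℓm.comp hμ₁)) hℓ₁
  obtain ⟨control_integrable, control_condExp⟩ :
      Integrable control P ∧ P[control | m] =ᵐ[P] ℓ ∘ μ₀ :=
    integrable_augmentedIPW_and_condExp_ae_eq hm (aestronglyMeasurable_const.sub hW) control_bound
      hY (aesm hμ₀) hη (heη.mono fun _ hω => le_sub_comm.mp hω.2)
      (condExp_one_sub_ae_eq hm (.of_bound hW K hWb) hce) hc0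
      (aesm (hderiv.comp hμ₀)) hderiv₀ (aesm (hℓm.comp hμ₀)) hℓ₀
  have score_integrable : Integrable (treated - control) P :=
    treated_integrable.sub control_integrable
  have score_condExp : P[treated - control | m] =ᵐ[P] ℓ ∘ μ₁ - ℓ ∘ μ₀ :=
    (condExp_sub treated_integrable control_integrable m).trans
      (treated_condExp.sub control_condExp)
  calc
    _ = ∫ ω, h ω * (treated - control) ω ∂P := by
        congr 1 with ω
        simp only [treated, control, augmentedIPW, Pi.sub_apply, Pi.add_apply, Pi.mul_apply,
          Pi.div_apply, Pi.one_apply, Function.comp_apply]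
        ring
    _ = ∫ ω, h ω * (ℓ ∘ μ₁ - ℓ ∘ μ₀) ω ∂P :=
        integral_mul_eq_of_condExp_ae_eq_s12 hm (aesm hh)
          (score_integrable.bdd_mul ((aesm hh).mono hm) hhb) score_integrable score_condExp

/-- Unbiasedness of the DINA (difference in natural parameters) pseudo-outcome with true
nuisance functions: for a differentiable link `ℓ` with `ℓ` and `ℓ′` bounded on the ranges of
`μ₀, μ₁`, and every bounded measurable `h`, the DINA one-step integrand identifies the
weighted average of the DINA treatment effect `τ(x) = ℓ(μ₁(x)) − ℓ(μ₀(x))`. -/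
theorem dina_one_step_unbiased
    {Ω 𝒳 : Type*} [MeasurableSpace Ω] [m𝒳 : MeasurableSpace 𝒳]
    (P : Measure Ω) [IsProbabilityMeasure P]
    (X : Ω → 𝒳) (W Y : Ω → ℝ)
    (hX : Measurable X) (hW : Measurable W) (hY : Measurable Y)
    (hW01 : ∀ᵐ ω ∂P, W ω = 0 ∨ W ω = 1)
    (M : ℝ) (hM : 0 < M) (hYb : ∀ᵐ ω ∂P, |Y ω| ≤ M)
    (e μ₀ μ₁ : 𝒳 → ℝ)
    (he : Measurable e) (hμ₀ : Measurable μ₀) (hμ₁ : Measurable μ₁)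
    (C₀ C₁ : ℝ) (hμ₀b : ∀ x, |μ₀ x| ≤ C₀) (hμ₁b : ∀ x, |μ₁ x| ≤ C₁)
    (η : ℝ) (hη₀ : 0 < η) (hη₁ : η < 1/2)
    (heb : ∀ x, η ≤ e x ∧ e x ≤ 1 - η)
    (hce : P[W | m𝒳.comap X] =ᵐ[P] fun ω => e (X ω))
    (hc1 : P[fun ω => W ω * Y ω | m𝒳.comap X] =ᵐ[P] fun ω => e (X ω) * μ₁ (X ω))
    (hc0 : P[fun ω => (1 - W ω) * Y ω | m𝒳.comap X]
        =ᵐ[P] fun ω => (1 - e (X ω)) * μ₀ (X ω))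
    (ℓ : ℝ → ℝ) (hℓ : Differentiable ℝ ℓ)
    (Cℓ : ℝ) (hℓb : ∀ x, |ℓ (μ₀ x)| ≤ Cℓ ∧ |ℓ (μ₁ x)| ≤ Cℓ
        ∧ |deriv ℓ (μ₀ x)| ≤ Cℓ ∧ |deriv ℓ (μ₁ x)| ≤ Cℓ) :
    ∀ (h : 𝒳 → ℝ) (Ch : ℝ), Measurable h → (∀ x, |h x| ≤ Ch) →
      ∫ ω, h (X ω) * (W ω * deriv ℓ (μ₁ (X ω)) * (Y ω - μ₁ (X ω)) / e (X ω)
            + ℓ (μ₁ (X ω))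
            - (1 - W ω) * deriv ℓ (μ₀ (X ω)) * (Y ω - μ₀ (X ω)) / (1 - e (X ω))
            - ℓ (μ₀ (X ω))) ∂P
        = ∫ ω, h (X ω) * (ℓ (μ₁ (X ω)) - ℓ (μ₀ (X ω))) ∂P := by
  intro h Ch hh hhb
  have comp_measurable {f : 𝒳 → ℝ} (hf : Measurable f) : Measurable[m𝒳.comap X] (f ∘ X) :=
    hf.comp (comap_measurable X)
  have link_integrable {μ : 𝒳 → ℝ} (hμ : Measurable μ) (hb : ∀ x, |ℓ (μ x)| ≤ Cℓ) :
      Integrable (ℓ ∘ μ ∘ X) P :=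
    .of_bound (hℓ.continuous.measurable.comp (hμ.comp hX)).aestronglyMeasurable Cℓ
      (.of_forall fun ω => hb (X ω))
  have hWb : ∀ᵐ ω ∂P, |W ω| ≤ 1 := by
    filter_upwards [hW01] with ω hω
    rcases hω with hω | hω <;> simp [hω]
  exact dina_one_step_unbiased_general hX.comap_le hW.aestronglyMeasurable hWb
    (.of_bound hY.aestronglyMeasurable M hYb) (comp_measurable hμ₀) (comp_measurable hμ₁)
    hη₀ (.of_forall fun ω => heb (X ω)) hce hc1 hc0 hℓ
    (link_integrable hμ₀ fun x => (hℓb x).1) (link_integrable hμ₁ fun x => (hℓb x).2.1)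
    (.of_forall fun ω => (hℓb (X ω)).2.2.1) (.of_forall fun ω => (hℓb (X ω)).2.2.2)
    (comp_measurable hh) (.of_forall fun ω => hhb (X ω))
end

section
/- Conditional variance of the AIPW pseudo-outcome: under the additive noise model, E[(Γ − τ(X))² ∣ σ(X)] = σ²/( e(X)·(1 − e(X)) ) almost surely; combined with E[Γ ∣ σ(X)] = τ(X), the conditional variance of Γ given X equals σ²/(e(X)(1−e(X))). -/
open MeasureTheory ProbabilityTheory

/-!
Since `W` only takes the values `0` and `1`, substituting the outcome model into `Γ` cancels both
regression functions and leaves `Γ - τ = α ε` with the single weight `α = (W - e) / (e (1 - e))`.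
Conditioning first on `(X, W)` replaces `ε` by its conditional mean `0` and `ε²` by its conditional
variance `v`; conditioning then on `X` replaces `(W - e)²` by the Bernoulli variance `e (1 - e)`, so
`α² v` becomes `v / (e (1 - e))`.
-/

section ConditionalExpectation

variable {Ω : Type*} {m m' mΩ : MeasurableSpace Ω} {P : Measure Ω}

lemma lintegral_condLExp_mul (hm : m ≤ mΩ) [SigmaFinite (P.trim hm)] {f g : Ω → ENNReal}
    (hf : AEMeasurable f P) (hg : Measurable[m] g) :
    ∫⁻ ω, P⁻[f | m] ω * g ω ∂P = ∫⁻ ω, f ω * g ω ∂P := by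
  have trim_eq : (P.withDensity P⁻[f | m]).trim hm = (P.withDensity f).trim hm := by
    refine @Measure.ext _ m _ _ fun s hs ↦ ?_
    rw [trim_measurableSet_eq hm hs, trim_measurableSet_eq hm hs, withDensity_apply _ (hm s hs),
      withDensity_apply _ (hm s hs), setLIntegral_condLExp hm P f hs]
  have hg' : Measurable g := hg.mono hm le_rfl
  calc ∫⁻ ω, P⁻[f | m] ω * g ω ∂P
      = ∫⁻ ω, g ω ∂P.withDensity P⁻[f | m] :=
        (lintegral_withDensity_eq_lintegral_mul₀ (by fun_prop) hg'.aemeasurable).symm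
    _ = ∫⁻ ω, g ω ∂P.withDensity f := by
        rw [← lintegral_trim hm hg, trim_eq, lintegral_trim hm hg]
    _ = ∫⁻ ω, f ω * g ω ∂P := lintegral_withDensity_eq_lintegral_mul₀ hf hg'.aemeasurable

lemma integrable_condExp_mul_iff_of_nonneg (hm : m ≤ mΩ) [SigmaFinite (P.trim hm)] {f g : Ω → ℝ}
    (hf : Integrable f P) (hf0 : 0 ≤ᵐ[P] f) (hg : StronglyMeasurable[m] g) :
    Integrable (P[f | m] * g) P ↔ Integrable (f * g) P := by
  have hg' : AEStronglyMeasurable g P := (hg.mono hm).aestronglyMeasurable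
  have lintegral_eq : ∫⁻ ω, ‖(P[f | m] * g) ω‖ₑ ∂P = ∫⁻ ω, ‖(f * g) ω‖ₑ ∂P :=
    calc ∫⁻ ω, ‖(P[f | m] * g) ω‖ₑ ∂P
        = ∫⁻ ω, P⁻[fun ω ↦ ‖f ω‖ₑ | m] ω * ‖g ω‖ₑ ∂P := by
          refine lintegral_congr_ae ?_
          filter_upwards [condLExp_enorm m hf hf0] with ω hω
          rw [hω, Pi.mul_apply, enorm_mul]
      _ = ∫⁻ ω, ‖f ω‖ₑ * ‖g ω‖ₑ ∂P :=
          lintegral_condLExp_mul hm hf.aestronglyMeasurable.enorm hg.enorm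
      _ = ∫⁻ ω, ‖(f * g) ω‖ₑ ∂P := by simp only [Pi.mul_apply, enorm_mul]
  rw [Integrable, Integrable, HasFiniteIntegral, HasFiniteIntegral, lintegral_eq]
  exact and_congr_left fun _ ↦ iff_of_true
    (integrable_condExp.aestronglyMeasurable.mul hg') (hf.aestronglyMeasurable.mul hg')

lemma condExp_mul_ae_eq_of_condExp_ae_eq (hm : m ≤ m') (hm' : m' ≤ mΩ)
    [SigmaFinite (P.trim hm')] {f g h : Ω → ℝ} (hf : Integrable f P) (hfh : P[f | m'] =ᵐ[P] h)
    (hg : StronglyMeasurable[m'] g) (hfg : Integrable (f * g) P) :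
    P[f * g | m] =ᵐ[P] P[h * g | m] :=
  calc P[f * g | m]
      =ᵐ[P] P[P[f * g | m'] | m] := (condExp_condExp_of_le hm hm').symm
    _ =ᵐ[P] P[h * g | m] := condExp_congr_ae
      ((condExp_mul_of_stronglyMeasurable_right hg hfg hf).trans (hfh.mul .rfl))

lemma condExp_comp_ae_eq_integral_of_indepFun {β γ E : Type*} [MeasurableSpace β]
    [MeasurableSpace γ] [NormedAddCommGroup E] [NormedSpace ℝ E] [CompleteSpace E]
    [IsFiniteMeasure P] {Z : Ω → β} {V : Ω → γ} {f : γ → E} (hZ : Measurable Z)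
    (hV : Measurable V) (hf : StronglyMeasurable f) (hindep : IndepFun Z V P) :
    P[f ∘ V | MeasurableSpace.comap Z inferInstance] =ᵐ[P] fun _ ↦ ∫ ω, f (V ω) ∂P :=
  condExp_indep_eq hV.comap_le hZ.comap_le (hf.comp_measurable (comap_measurable V))
    ((IndepFun_iff_Indep _ _ _).1 hindep).symm

lemma memLp_of_ae_eq_zero_or_one [IsFiniteMeasure P] {W : Ω → ℝ} {p : ENNReal}
    (hW : AEStronglyMeasurable W P) (hW01 : ∀ᵐ ω ∂P, W ω = 0 ∨ W ω = 1) : MemLp W p P :=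
  MemLp.of_bound hW 1 <| hW01.mono fun _ h ↦ by rcases h with h | h <;> simp [h]

lemma condVar_ae_eq_of_ae_eq_zero_or_one [IsFiniteMeasure P] (hm : m ≤ mΩ) {W : Ω → ℝ}
    (hW : AEStronglyMeasurable W P) (hW01 : ∀ᵐ ω ∂P, W ω = 0 ∨ W ω = 1) :
    Var[W; P | m] =ᵐ[P] P[W | m] * (1 - P[W | m]) := by
  have sq_eq : W ^ 2 =ᵐ[P] W := hW01.mono fun ω h ↦ by
    rcases h with h | h <;> simp [h]
  filter_upwards [condVar_ae_eq_condExp_sq_sub_sq_condExp hm (memLp_of_ae_eq_zero_or_one hW hW01),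
    condExp_congr_ae (m := m) sq_eq] with ω hvar hsq
  simp only [hvar, hsq, Pi.sub_apply, Pi.pow_apply, Pi.mul_apply, Pi.one_apply]
  ring

lemma condExp_sq_ae_eq_variance_of_indepFun {β : Type*} [MeasurableSpace β] [IsFiniteMeasure P]
    {Z : Ω → β} {V : Ω → ℝ} (hZ : Measurable Z) (hV : Measurable V) (hindep : IndepFun Z V P)
    (hmean : ∫ ω, V ω ∂P = 0) :
    P[V ^ 2 | MeasurableSpace.comap Z inferInstance] =ᵐ[P] fun _ ↦ variance V P := by
  rw [variance_of_integral_eq_zero hV.aemeasurable hmean]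
  exact condExp_comp_ae_eq_integral_of_indepFun (f := fun t ↦ t ^ 2) hZ hV (by fun_prop) hindep

end ConditionalExpectation

section AIPW

variable {Ω : Type*}

/-- The augmented inverse-probability-weighted pseudo-outcome `Γ` of a treatment `W` and an
outcome `Y`. The propensity score `e` and the regression functions `μ₀`, `μ₁` are functions on the
sample space, i.e. already composed with the covariate. -/
noncomputable def aipwPseudoOutcome (W Y e μ₀ μ₁ : Ω → ℝ) (ω : Ω) : ℝ :=
  W ω * (Y ω - μ₁ ω) / e ω + μ₁ ω - (1 - W ω) * (Y ω - μ₀ ω) / (1 - e ω) - μ₀ ω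

/-- The weight with which the noise enters the AIPW pseudo-outcome: `1 / e` on treated and
`-1 / (1 - e)` on untreated units, written as one fraction. -/
noncomputable def aipwWeight (W e : Ω → ℝ) : Ω → ℝ :=
  (W - e) / (e * (1 - e))

variable {m m' mΩ : MeasurableSpace Ω} {P : Measure Ω} {W Y e μ₀ μ₁ ε v : Ω → ℝ}

lemma aipwPseudoOutcome_sub_ae_eq_mul_aipwWeight (hW01 : ∀ᵐ ω ∂P, W ω = 0 ∨ W ω = 1)
    (he01 : ∀ᵐ ω ∂P, 0 < e ω ∧ e ω < 1)
    (hmodel : ∀ᵐ ω ∂P, Y ω = W ω * μ₁ ω + (1 - W ω) * μ₀ ω + ε ω) :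
    aipwPseudoOutcome W Y e μ₀ μ₁ - (μ₁ - μ₀) =ᵐ[P] ε * aipwWeight W e := by
  filter_upwards [hW01, he01, hmodel] with ω hw ⟨he_pos, he_lt⟩ hy
  have he_ne : e ω ≠ 0 := he_pos.ne'
  have he_ne' : 1 - e ω ≠ 0 := (sub_pos.2 he_lt).ne'
  simp only [aipwPseudoOutcome, aipwWeight, Pi.sub_apply, Pi.mul_apply, Pi.div_apply,
    Pi.one_apply, hy]
  rcases hw with hw | hw <;> rw [hw] <;> field_simp <;> ring

lemma stronglyMeasurable_aipwWeight (hW : StronglyMeasurable[m] W)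
    (he : StronglyMeasurable[m] e) : StronglyMeasurable[m] (aipwWeight W e) :=
  (hW.sub he).div (he.mul (stronglyMeasurable_one.sub he))

variable [IsFiniteMeasure P]

lemma integrable_const_div_mul_one_sub_of_overlap {η : ℝ} (c : ℝ) (hη : 0 < η)
    (he : AEMeasurable e P) (heη : ∀ᵐ ω ∂P, η ≤ e ω ∧ e ω ≤ 1 - η) :
    Integrable (fun ω ↦ c / (e ω * (1 - e ω))) P := by
  have hmeas : AEMeasurable (fun ω ↦ c / (e ω * (1 - e ω))) P := by fun_prop
  refine .of_bound hmeas.aestronglyMeasurable (|c| / (η * η)) ?_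
  filter_upwards [heη] with ω ⟨h_ge, h_le⟩
  have h_mul : η * η ≤ e ω * (1 - e ω) :=
    mul_le_mul h_ge (le_sub_comm.1 h_le) hη.le (hη.le.trans h_ge)
  have h_pos : 0 < η * η := mul_pos hη hη
  rw [norm_div, Real.norm_eq_abs, Real.norm_of_nonneg (h_pos.le.trans h_mul)]
  gcongr

lemma condExp_sq_sub_ae_eq_mul_one_sub (hm : m ≤ mΩ) (hW : AEStronglyMeasurable W P)
    (hW01 : ∀ᵐ ω ∂P, W ω = 0 ∨ W ω = 1) (hce : P[W | m] =ᵐ[P] e) :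
    P[(W - e) ^ 2 | m] =ᵐ[P] e * (1 - e) := by
  have sq_ae_eq : (W - e) ^ 2 =ᵐ[P] (W - P[W | m]) ^ 2 :=
    hce.mono fun ω h ↦ by simp [h]
  filter_upwards [condExp_congr_ae (m := m) sq_ae_eq, condVar_ae_eq_of_ae_eq_zero_or_one hm hW hW01,
    hce] with ω hsq hvar he
  rw [hsq, ← condVar, hvar, Pi.mul_apply, Pi.mul_apply, Pi.sub_apply, Pi.sub_apply, he]

lemma integrable_and_condExp_mul_sq_aipwWeight (hm : m ≤ mΩ) (hW : AEStronglyMeasurable W P)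
    (hW01 : ∀ᵐ ω ∂P, W ω = 0 ∨ W ω = 1) (he : StronglyMeasurable[m] e)
    (he01 : ∀ᵐ ω ∂P, 0 < e ω ∧ e ω < 1) (hce : P[W | m] =ᵐ[P] e)
    (hv : StronglyMeasurable[m] v) (hint : Integrable (v / (e * (1 - e))) P) :
    Integrable (v * aipwWeight W e ^ 2) P ∧
      P[v * aipwWeight W e ^ 2 | m] =ᵐ[P] v / (e * (1 - e)) := by
  set g : Ω → ℝ := v / (e * (1 - e)) ^ 2
  have hg : StronglyMeasurable[m] g := hv.div ((he.mul (stronglyMeasurable_one.sub he)).pow 2)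
  have factor : v * aipwWeight W e ^ 2 = (W - e) ^ 2 * g := by
    rw [aipwWeight, div_pow, mul_div_assoc', mul_comm v, ← mul_div_assoc]
  have hW2 : MemLp W 2 P := memLp_of_ae_eq_zero_or_one hW hW01
  have hWe : Integrable ((W - e) ^ 2) P :=
    (hW2.sub ((memLp_congr_ae hce).1 (hW2.condExp one_le_two))).integrable_sq
  have condExp_mul_eq : P[(W - e) ^ 2 | m] * g =ᵐ[P] v / (e * (1 - e)) := by
    filter_upwards [condExp_sq_sub_ae_eq_mul_one_sub hm hW hW01 hce, he01]
      with ω hsq ⟨he_pos, he_lt⟩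
    have he_ne : e ω * (1 - e ω) ≠ 0 := (mul_pos he_pos (sub_pos.2 he_lt)).ne'
    simp only [g, hsq, Pi.mul_apply, Pi.div_apply, Pi.pow_apply, Pi.sub_apply, Pi.one_apply]
    field_simp [he_ne]
  have hWeg : Integrable ((W - e) ^ 2 * g) P :=
    (integrable_condExp_mul_iff_of_nonneg hm hWe (.of_forall fun _ ↦ sq_nonneg _) hg).1
      (hint.congr condExp_mul_eq.symm)
  rw [factor]
  exact ⟨hWeg, (condExp_mul_of_stronglyMeasurable_right hg hWeg hWe).trans condExp_mul_eq⟩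

/-- `m` and `m'` play the roles of `σ(X)` and `σ(X, W)`, and `v` is the conditional variance of the
noise, which may depend on the covariate but not on the treatment. -/
theorem aipw_conditional_variance_general (hm : m ≤ m') (hm' : m' ≤ mΩ)
    (hW : StronglyMeasurable[m'] W) (hW01 : ∀ᵐ ω ∂P, W ω = 0 ∨ W ω = 1)
    (he : StronglyMeasurable[m] e) (he01 : ∀ᵐ ω ∂P, 0 < e ω ∧ e ω < 1) (hce : P[W | m] =ᵐ[P] e)
    (hτ : StronglyMeasurable[m] (μ₁ - μ₀)) (hτ_int : Integrable (μ₁ - μ₀) P)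
    (hε : MemLp ε 2 P) (hε_mean : P[ε | m'] =ᵐ[P] 0) (hε_var : P[ε ^ 2 | m'] =ᵐ[P] v)
    (hv : StronglyMeasurable[m] v) (hint : Integrable (v / (e * (1 - e))) P)
    (hmodel : ∀ᵐ ω ∂P, Y ω = W ω * μ₁ ω + (1 - W ω) * μ₀ ω + ε ω) :
    P[(aipwPseudoOutcome W Y e μ₀ μ₁ - (μ₁ - μ₀)) ^ 2 | m] =ᵐ[P] v / (e * (1 - e)) ∧
      P[aipwPseudoOutcome W Y e μ₀ μ₁ | m] =ᵐ[P] μ₁ - μ₀ := by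
  set Γ := aipwPseudoOutcome W Y e μ₀ μ₁
  set α := aipwWeight W e
  have hα : StronglyMeasurable[m'] α := stronglyMeasurable_aipwWeight hW (he.mono hm)
  have error_eq : Γ - (μ₁ - μ₀) =ᵐ[P] ε * α :=
    aipwPseudoOutcome_sub_ae_eq_mul_aipwWeight hW01 he01 hmodel
  obtain ⟨hvα, condExp_vα⟩ := integrable_and_condExp_mul_sq_aipwWeight (hm.trans hm')
    (hW.mono hm').aestronglyMeasurable hW01 he he01 hce hv hint
  have hεα_sq : Integrable (ε ^ 2 * α ^ 2) P :=
    (integrable_condExp_mul_iff_of_nonneg hm' hε.integrable_sq (.of_forall fun _ ↦ sq_nonneg _)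
      (hα.pow 2)).1 (hvα.congr (hε_var.symm.mul .rfl))
  have hεα : Integrable (ε * α) P := by
    rw [← mul_pow] at hεα_sq
    exact ((memLp_two_iff_integrable_sq (hε.aestronglyMeasurable.mul
      (hα.mono hm').aestronglyMeasurable)).2 hεα_sq).integrable one_le_two
  constructor
  · calc P[(Γ - (μ₁ - μ₀)) ^ 2 | m]
        =ᵐ[P] P[ε ^ 2 * α ^ 2 | m] := condExp_congr_ae (mul_pow ε α 2 ▸ error_eq.pow_const 2)
      _ =ᵐ[P] P[v * α ^ 2 | m] := condExp_mul_ae_eq_of_condExp_ae_eq hm hm' hε.integrable_sq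
          hε_var (hα.pow 2) hεα_sq
      _ =ᵐ[P] v / (e * (1 - e)) := condExp_vα
  · have condExp_error : P[ε * α | m] =ᵐ[P] P[0 * α | m] :=
      condExp_mul_ae_eq_of_condExp_ae_eq hm hm' (hε.integrable one_le_two) hε_mean hα hεα
    rw [zero_mul, condExp_zero] at condExp_error
    calc P[Γ | m]
        =ᵐ[P] P[ε * α + (μ₁ - μ₀) | m] :=
          condExp_congr_ae (error_eq.mono fun ω h ↦ by simp [← h])
      _ =ᵐ[P] P[ε * α | m] + P[μ₁ - μ₀ | m] := condExp_add hεα hτ_int m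
      _ =ᵐ[P] 0 + (μ₁ - μ₀) := condExp_error.add
          (condExp_of_stronglyMeasurable (hm.trans hm') hτ hτ_int).eventuallyEq
      _ = μ₁ - μ₀ := zero_add _

end AIPW

/-- Conditional variance of the AIPW pseudo-outcome: under the additive noise model,
`E[(Γ − τ(X))² ∣ σ(X)] = σ²/(e(X)(1 − e(X)))` almost surely, and `E[Γ ∣ σ(X)] = τ(X)`
almost surely, so the conditional variance of `Γ` given `X` equals `σ²/(e(X)(1−e(X)))`. -/
theorem aipw_conditional_variance
    {Ω 𝒳 : Type*} [MeasurableSpace Ω] [m𝒳 : MeasurableSpace 𝒳]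
    (P : Measure Ω) [IsProbabilityMeasure P]
    (X : Ω → 𝒳) (W Y : Ω → ℝ)
    (hX : Measurable X) (hW : Measurable W) (hY : Measurable Y)
    (hW01 : ∀ᵐ ω ∂P, W ω = 0 ∨ W ω = 1)
    (e μ₀ μ₁ : 𝒳 → ℝ)
    (he : Measurable e) (hμ₀ : Measurable μ₀) (hμ₁ : Measurable μ₁)
    (C₀ C₁ : ℝ) (hμ₀b : ∀ x, |μ₀ x| ≤ C₀) (hμ₁b : ∀ x, |μ₁ x| ≤ C₁)
    (η : ℝ) (hη₀ : 0 < η) (hη₁ : η < 1/2)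
    (heb : ∀ x, η ≤ e x ∧ e x ≤ 1 - η)
    (hce : P[W | m𝒳.comap X] =ᵐ[P] fun ω => e (X ω))
    (ε : Ω → ℝ) (hε : Measurable ε)
    (hindep : IndepFun (fun ω => (X ω, W ω)) ε P)
    (hε2 : MemLp ε 2 P) (hεmean : ∫ ω, ε ω ∂P = 0)
    (σ2 : ℝ) (hεvar : variance ε P = σ2)
    (hmodel : ∀ᵐ ω ∂P, Y ω = W ω * μ₁ (X ω) + (1 - W ω) * μ₀ (X ω) + ε ω) :
    (P[fun ω => ((W ω * (Y ω - μ₁ (X ω)) / e (X ω) + μ₁ (X ω)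
          - (1 - W ω) * (Y ω - μ₀ (X ω)) / (1 - e (X ω)) - μ₀ (X ω))
          - (μ₁ (X ω) - μ₀ (X ω))) ^ 2 | m𝒳.comap X]
        =ᵐ[P] fun ω => σ2 / (e (X ω) * (1 - e (X ω))))
      ∧ (P[fun ω => W ω * (Y ω - μ₁ (X ω)) / e (X ω) + μ₁ (X ω)
          - (1 - W ω) * (Y ω - μ₀ (X ω)) / (1 - e (X ω)) - μ₀ (X ω) | m𝒳.comap X]
        =ᵐ[P] fun ω => μ₁ (X ω) - μ₀ (X ω)) := by
  have hXm : Measurable[m𝒳.comap X] X := comap_measurable X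
  have hXWm := comap_measurable (m := inferInstance) fun ω ↦ (X ω, W ω)
  have hXW : Measurable fun ω ↦ (X ω, W ω) := hX.prodMk hW
  have he01 (ω : Ω) : 0 < e (X ω) ∧ e (X ω) < 1 :=
    ⟨hη₀.trans_le (heb _).1, (heb _).2.trans_lt (sub_lt_self 1 hη₀)⟩
  have hτ_int : Integrable (fun ω ↦ μ₁ (X ω) - μ₀ (X ω)) P := .of_bound (by fun_prop) (C₁ + C₀)
    (.of_forall fun _ ↦ norm_sub_le_of_le (hμ₁b _) (hμ₀b _))
  have hint : Integrable (fun ω ↦ σ2 / (e (X ω) * (1 - e (X ω)))) P :=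
    integrable_const_div_mul_one_sub_of_overlap σ2 hη₀ (he.comp hX).aemeasurable
      (.of_forall fun _ ↦ heb _)
  have hε_mean := condExp_comp_ae_eq_integral_of_indepFun hXW hε stronglyMeasurable_id hindep
  have hε_var := condExp_sq_ae_eq_variance_of_indepFun hXW hε hindep hεmean
  simp only [id, hεmean] at hε_mean
  rw [hεvar] at hε_var
  exact aipw_conditional_variance_general (measurable_fst.comp hXWm).comap_le hXW.comap_le
    (measurable_snd.comp hXWm).stronglyMeasurable hW01 (he.comp hXm).stronglyMeasurable
    (.of_forall he01) hce ((hμ₁.sub hμ₀).comp hXm).stronglyMeasurable hτ_int hε2 hε_mean hε_var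
    stronglyMeasurable_const hint hmodel
end
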